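/- arXiv:2501.15976 — 7 statements merged into one kernel-verified Lean document; each statement's English description precedes it below -/
import Mathlib

section
/- Let V_1, V_2 ∈ ℂ^n and set W_j := D_k V_j for j = 1, 2. Then ⟨V_1, V_2⟩_{D_k} = ⟨W_1, W_2⟩_{D_k^{-1}}, and moreover ⟨V_1, B_a^{-1}(A†) A† V_2⟩_{D_k} = ⟨A B_a^{-1}(A) W_1, W_2⟩_{D_k^{-1}} and ⟨V_1, B_{h,L}^{-1}(A†) A† V_2⟩_{D_k} = ⟨A B_{h,R}^{-1}(A) W_1, W_2⟩_{D_k^{-1}}. -/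
/-!
The weight `D` is Hermitian and invertible, so `⟨x, D V⟩_{D⁻¹} = V† D D⁻¹ x = V† x`. Both
nontrivial identities therefore reduce to `(P A†)† = A Q`, i.e. to the fact that the
preconditioner `P` built from `A†` is the conjugate transpose of the preconditioner `Q` built
from `A`. Since the restriction matrices are real, `R† = Rᵀ`, hence
`(Rᵀ (R A† Rᵀ)⁻¹ R)† = Rᵀ (R A Rᵀ)⁻¹ R`; this settles the additive case. In the hybrid case
the conjugate transpose also reverses the order of the factors, turning the left hybrid
preconditioner into the right one after absorbing `D D⁻¹ = 1`.
-/

open Matrix Finset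
open scoped ComplexOrder

/-- The additive Schwarz preconditioner `B_a⁻¹(M)`, as a function of the system matrix `M`. -/
noncomputable def addSchwarzInv {n N m : ℕ} {nl : Fin N → ℕ}
    (R0c : Matrix (Fin m) (Fin n) ℂ)
    (Rlc : (ℓ : Fin N) → Matrix (Fin (nl ℓ)) (Fin n) ℂ)
    (M : Matrix (Fin n) (Fin n) ℂ) : Matrix (Fin n) (Fin n) ℂ :=
  R0cᵀ * (R0c * M * R0cᵀ)⁻¹ * R0c +
    ∑ ℓ, (Rlc ℓ)ᵀ * (Rlc ℓ * M * (Rlc ℓ)ᵀ)⁻¹ * Rlc ℓ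

/-- The left hybrid Schwarz preconditioner `B_{h,L}⁻¹(M)`, as a function of the system
matrix `M`. -/
noncomputable def leftHybridSchwarzInv {n N m : ℕ} {nl : Fin N → ℕ}
    (R0c : Matrix (Fin m) (Fin n) ℂ)
    (Rlc : (ℓ : Fin N) → Matrix (Fin (nl ℓ)) (Fin n) ℂ)
    (Dc : Matrix (Fin n) (Fin n) ℂ)
    (M : Matrix (Fin n) (Fin n) ℂ) : Matrix (Fin n) (Fin n) ℂ :=
  R0cᵀ * (R0c * M * R0cᵀ)⁻¹ * R0c +
    Dc⁻¹ * (1 - Mᴴ * R0cᵀ * ((R0c * M * R0cᵀ)ᴴ)⁻¹ * R0c) * Dc *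
      (∑ ℓ, (Rlc ℓ)ᵀ * (Rlc ℓ * M * (Rlc ℓ)ᵀ)⁻¹ * Rlc ℓ) *
      (1 - M * R0cᵀ * (R0c * M * R0cᵀ)⁻¹ * R0c)

/-- The right hybrid Schwarz preconditioner `B_{h,R}⁻¹(M)`, as a function of the system
matrix `M`. -/
noncomputable def rightHybridSchwarzInv {n N m : ℕ} {nl : Fin N → ℕ}
    (R0c : Matrix (Fin m) (Fin n) ℂ)
    (Rlc : (ℓ : Fin N) → Matrix (Fin (nl ℓ)) (Fin n) ℂ)
    (Dc : Matrix (Fin n) (Fin n) ℂ)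
    (M : Matrix (Fin n) (Fin n) ℂ) : Matrix (Fin n) (Fin n) ℂ :=
  R0cᵀ * (R0c * M * R0cᵀ)⁻¹ * R0c +
    (1 - R0cᵀ * (R0c * M * R0cᵀ)⁻¹ * R0c * M) *
      (∑ ℓ, (Rlc ℓ)ᵀ * (Rlc ℓ * M * (Rlc ℓ)ᵀ)⁻¹ * Rlc ℓ) *
      (1 - Dc * R0cᵀ * ((R0c * M * R0cᵀ)ᴴ)⁻¹ * R0c * Mᴴ * Dc⁻¹)

/-- Real matrices, viewed as complex ones, have equal transpose and conjugate transpose. -/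
lemma conjTranspose_of_real {p q : ℕ} (S : Matrix (Fin p) (Fin q) ℝ) :
    (S.map (fun x => (x : ℂ)))ᴴ = (S.map (fun x => (x : ℂ)))ᵀ := by
  ext i j
  simp

lemma conjTranspose_galerkin {p q : ℕ} (R : Matrix (Fin p) (Fin q) ℂ) (hR : Rᴴ = Rᵀ)
    (A : Matrix (Fin q) (Fin q) ℂ) : (R * Aᴴ * Rᵀ)ᴴ = R * A * Rᵀ := by
  rw [← hR]
  simp [conjTranspose_mul, Matrix.mul_assoc]

/-- The coarse and local solves built from `A†` are the conjugate transposes of those built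
from `A`. -/
lemma conjTranspose_solve {p q : ℕ} (R : Matrix (Fin p) (Fin q) ℂ) (hR : Rᴴ = Rᵀ)
    (A : Matrix (Fin q) (Fin q) ℂ) :
    (Rᵀ * (R * Aᴴ * Rᵀ)⁻¹ * R)ᴴ = Rᵀ * (R * A * Rᵀ)⁻¹ * R := by
  rw [conjTranspose_mul, conjTranspose_mul, conjTranspose_nonsing_inv,
    conjTranspose_galerkin R hR, ← hR, conjTranspose_conjTranspose]
  simp only [Matrix.mul_assoc]

lemma conjTranspose_addSchwarzInv {n N m : ℕ} {nl : Fin N → ℕ}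
    (R0c : Matrix (Fin m) (Fin n) ℂ) (h0 : R0cᴴ = R0cᵀ)
    (Rlc : (ℓ : Fin N) → Matrix (Fin (nl ℓ)) (Fin n) ℂ) (hl : ∀ ℓ, (Rlc ℓ)ᴴ = (Rlc ℓ)ᵀ)
    (A : Matrix (Fin n) (Fin n) ℂ) :
    (addSchwarzInv R0c Rlc Aᴴ)ᴴ = addSchwarzInv R0c Rlc A := by
  unfold addSchwarzInv
  rw [conjTranspose_add, conjTranspose_sum, conjTranspose_solve R0c h0]
  simp only [conjTranspose_solve _ (hl _)]

/-- Conjugate transposition exchanges the left hybrid preconditioner of `A†` and the right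
hybrid preconditioner of `A`. -/
lemma conjTranspose_leftHybridSchwarzInv {n N m : ℕ} {nl : Fin N → ℕ}
    (R0c : Matrix (Fin m) (Fin n) ℂ) (h0 : R0cᴴ = R0cᵀ)
    (Rlc : (ℓ : Fin N) → Matrix (Fin (nl ℓ)) (Fin n) ℂ) (hl : ∀ ℓ, (Rlc ℓ)ᴴ = (Rlc ℓ)ᵀ)
    (A Dc : Matrix (Fin n) (Fin n) ℂ) (hD : Dcᴴ = Dc) (hDu : IsUnit Dc.det) :
    (leftHybridSchwarzInv R0c Rlc Dc Aᴴ)ᴴ = rightHybridSchwarzInv R0c Rlc Dc A := by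
  have hG : (R0c * A * R0cᵀ)ᴴ = R0c * Aᴴ * R0cᵀ := by
    simpa using conjTranspose_galerkin R0c h0 Aᴴ
  have h0' : R0cᵀᴴ = R0c := by rw [← h0, conjTranspose_conjTranspose]
  have hS : (∑ ℓ, (Rlc ℓ)ᵀ * (Rlc ℓ * Aᴴ * (Rlc ℓ)ᵀ)⁻¹ * Rlc ℓ)ᴴ
      = ∑ ℓ, (Rlc ℓ)ᵀ * (Rlc ℓ * A * (Rlc ℓ)ᵀ)⁻¹ * Rlc ℓ := by
    rw [conjTranspose_sum]
    exact Finset.sum_congr rfl fun ℓ _ => conjTranspose_solve _ (hl ℓ) A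
  -- The last factor of the right hybrid preconditioner is a conjugate by `D` of a factor free
  -- of `D`.
  have hconj : Dc * (1 - R0cᵀ * (R0c * Aᴴ * R0cᵀ)⁻¹ * R0c * Aᴴ) * Dc⁻¹
      = 1 - Dc * R0cᵀ * (R0c * Aᴴ * R0cᵀ)⁻¹ * R0c * Aᴴ * Dc⁻¹ := by
    rw [Matrix.mul_sub, Matrix.sub_mul, Matrix.mul_one, mul_nonsing_inv _ hDu]
    simp only [Matrix.mul_assoc]
  have hleft : (1 - Aᴴ * R0cᵀ * (R0c * Aᴴ * R0cᵀ)⁻¹ * R0c)ᴴ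
      = 1 - R0cᵀ * (R0c * A * R0cᵀ)⁻¹ * R0c * A := by
    simp only [conjTranspose_sub, conjTranspose_one, conjTranspose_mul,
      conjTranspose_nonsing_inv, conjTranspose_conjTranspose, h0, h0', Matrix.mul_assoc]
  have hright : (1 - A * R0cᵀ * (R0c * A * R0cᵀ)⁻¹ * R0c)ᴴ
      = 1 - R0cᵀ * (R0c * Aᴴ * R0cᵀ)⁻¹ * R0c * Aᴴ := by
    simp only [conjTranspose_sub, conjTranspose_one, conjTranspose_mul,
      conjTranspose_nonsing_inv, h0, h0', Matrix.mul_assoc]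
  unfold leftHybridSchwarzInv rightHybridSchwarzInv
  rw [hG, conjTranspose_galerkin R0c h0, conjTranspose_conjTranspose, ← hconj,
    conjTranspose_add, conjTranspose_solve R0c h0, conjTranspose_mul, conjTranspose_mul, hS,
    hleft, conjTranspose_mul, conjTranspose_mul, hright, conjTranspose_nonsing_inv, hD]
  simp only [Matrix.mul_assoc]

lemma weighted_dotProduct {n : ℕ} (Dc : Matrix (Fin n) (Fin n) ℂ) (hD : Dcᴴ = Dc)
    (hDu : IsUnit Dc.det) (V x : Fin n → ℂ) :
    star (Dc.mulVec V) ⬝ᵥ Dc⁻¹.mulVec x = star V ⬝ᵥ x := by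
  rw [star_mulVec, hD, ← dotProduct_mulVec, mulVec_mulVec, mul_nonsing_inv _ hDu, one_mulVec]

/-- If `P† = Q`, then `P A†` and `A Q` are adjoint to each other with respect to the weights
`D` and `D⁻¹`, after the change of variables `W = D V`. -/
lemma weighted_adjoint {n : ℕ} (A P Q Dc : Matrix (Fin n) (Fin n) ℂ) (hD : Dcᴴ = Dc)
    (hDu : IsUnit Dc.det) (hPQ : Pᴴ = Q) (V1 V2 : Fin n → ℂ) :
    star ((P * Aᴴ).mulVec V2) ⬝ᵥ Dc.mulVec V1
      = star (Dc.mulVec V2) ⬝ᵥ Dc⁻¹.mulVec ((A * Q).mulVec (Dc.mulVec V1)) := by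
  rw [weighted_dotProduct Dc hD hDu, star_mulVec, conjTranspose_mul,
    conjTranspose_conjTranspose, hPQ, ← dotProduct_mulVec]

/-- With `W_j := D_k V_j`, one has `⟨V₁, V₂⟩_{D_k} = ⟨W₁, W₂⟩_{D_k⁻¹}`,
`⟨V₁, B_a⁻¹(A†) A† V₂⟩_{D_k} = ⟨A B_a⁻¹(A) W₁, W₂⟩_{D_k⁻¹}`, and
`⟨V₁, B_{h,L}⁻¹(A†) A† V₂⟩_{D_k} = ⟨A B_{h,R}⁻¹(A) W₁, W₂⟩_{D_k⁻¹}`,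
where `⟨V, W⟩_{D} := W† D V`. -/
theorem schwarz_preconditioner_weighted_inner_product_identities
    {n N m : ℕ} {nl : Fin N → ℕ}
    -- the system matrix `A`, invertible
    (A : Matrix (Fin n) (Fin n) ℂ) (hA : IsUnit A)
    -- the restriction matrices are real
    (R0 : Matrix (Fin m) (Fin n) ℝ)
    (R0c : Matrix (Fin m) (Fin n) ℂ) (hR0c : R0c = R0.map (fun x => (x : ℂ)))
    (Rl : (ℓ : Fin N) → Matrix (Fin (nl ℓ)) (Fin n) ℝ)
    (Rlc : (ℓ : Fin N) → Matrix (Fin (nl ℓ)) (Fin n) ℂ)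
    (hRlc : ∀ ℓ, Rlc ℓ = (Rl ℓ).map (fun x => (x : ℂ)))
    -- the local matrices `A_ℓ = R_ℓ A R_ℓᵀ` are invertible, as are `R_ℓ A† R_ℓᵀ = A_ℓ†`
    (hA0unit : IsUnit (R0c * A * R0cᵀ))
    (hAlunit : ∀ ℓ, IsUnit (Rlc ℓ * A * (Rlc ℓ)ᵀ))
    (hA0unit' : IsUnit (R0c * Aᴴ * R0cᵀ))
    (hAlunit' : ∀ ℓ, IsUnit (Rlc ℓ * Aᴴ * (Rlc ℓ)ᵀ))
    -- `D_k` is a real symmetric positive-definite matrix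
    (D : Matrix (Fin n) (Fin n) ℝ) (hD : D.PosDef)
    (Dc : Matrix (Fin n) (Fin n) ℂ) (hDc : Dc = D.map (fun x => (x : ℂ))) :
    ∀ V1 V2 W1 W2 : Fin n → ℂ, W1 = Dc.mulVec V1 → W2 = Dc.mulVec V2 →
      (star V2 ⬝ᵥ Dc.mulVec V1 = star W2 ⬝ᵥ Dc⁻¹.mulVec W1) ∧
      (star ((addSchwarzInv R0c Rlc Aᴴ * Aᴴ).mulVec V2) ⬝ᵥ Dc.mulVec V1
        = star W2 ⬝ᵥ Dc⁻¹.mulVec ((A * addSchwarzInv R0c Rlc A).mulVec W1)) ∧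
      (star ((leftHybridSchwarzInv R0c Rlc Dc Aᴴ * Aᴴ).mulVec V2) ⬝ᵥ Dc.mulVec V1
        = star W2 ⬝ᵥ Dc⁻¹.mulVec ((A * rightHybridSchwarzInv R0c Rlc Dc A).mulVec W1)) := by
  have h0 : R0cᴴ = R0cᵀ := by
    rw [hR0c]
    exact conjTranspose_of_real R0
  have hl : ∀ ℓ, (Rlc ℓ)ᴴ = (Rlc ℓ)ᵀ := fun ℓ => by
    rw [hRlc ℓ]
    exact conjTranspose_of_real (Rl ℓ)
  have hDh : Dcᴴ = Dc := by
    have hDt : Dᵀ = D := by simpa using hD.isHermitian.eq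
    rw [hDc, conjTranspose_of_real, ← transpose_map, hDt]
  have hDu : IsUnit Dc.det := by
    have hdet : Dc.det = (D.det : ℂ) := by
      rw [hDc]
      exact (Complex.ofRealHom.map_det D).symm
    rw [hdet, isUnit_iff_ne_zero]
    exact_mod_cast hD.det_pos.ne'
  rintro V1 V2 _ _ rfl rfl
  exact ⟨(weighted_dotProduct Dc hDh hDu V2 _).symm,
    weighted_adjoint A _ _ Dc hDh hDu (conjTranspose_addSchwarzInv R0c h0 Rlc hl A) V1 V2,
    weighted_adjoint A _ _ Dc hDh hDu
      (conjTranspose_leftHybridSchwarzInv R0c h0 Rlc hl A Dc hDh hDu) V1 V2⟩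
end

section
/- (Abstract key Gårding lemma.) Let V_1, …, V_N ⊆ V_h be subspaces on which the Galerkin projections Q_ℓ := Q_{V_ℓ} are well defined. Suppose w ∈ V_h admits a splitting w = Σ_{ℓ=1}^N w_ℓ with w_ℓ ∈ V_ℓ and Σ_{ℓ=1}^N ‖w_ℓ‖_V² ≤ C_* (‖w‖_V² + β ‖w‖_H²) for some constants C_* > 0 and β ≥ 0. Then ‖w‖_V² ≤ C_cont² C_* Σ_{ℓ=1}^N ‖Q_ℓ w‖_V² + (2 C_μ + β) ‖w‖_H². -/
/-!
The form satisfies the Gårding inequality `‖w‖² - C_μ ‖w‖_H² ≤ |a(w, w)|`. Expanding the second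
argument along the splitting and using Galerkin orthogonality gives
`a(w, w) = ∑_ℓ a(Q_ℓ w, w_ℓ)`. Continuity of `a` and a weighted Young inequality bound this by
`C_cont² C_* / 2 * ∑_ℓ ‖Q_ℓ w‖² + (2 C_*)⁻¹ * ∑_ℓ ‖w_ℓ‖²`, and by stability of the splitting the
last term is at most `(‖w‖² + β ‖w‖_H²) / 2`, whose part `‖w‖² / 2` is absorbed on the left.
-/

open Finset
open scoped InnerProductSpace

/-- (Abstract key Gårding lemma.) If `w = ∑_ℓ w_ℓ` is a stable
splitting with `∑_ℓ ‖w_ℓ‖_V² ≤ C_*(‖w‖_V² + β ‖w‖_H²)`, then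
`‖w‖_V² ≤ C_cont² C_* ∑_ℓ ‖Q_ℓ w‖_V² + (2C_μ + β) ‖w‖_H²`. -/
theorem abstract_key_garding_lemma
    {V : Type*} [NormedAddCommGroup V] [InnerProductSpace ℂ V] [FiniteDimensional ℂ V]
    -- a second inner product `(·,·)_H` (linear in the first argument, conjugate-linear
    -- in the second) with norm `normH`, dominated by the `V`-norm `‖·‖`
    (ipH : V →ₗ[ℂ] V →ₛₗ[starRingEnd ℂ] ℂ)
    (hHsymm : ∀ u v : V, ipH u v = starRingEnd ℂ (ipH v u))
    (hHdef : ∀ v : V, ipH v v = 0 → v = 0)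
    (normH : V → ℝ) (hnormH : ∀ v : V, normH v = Real.sqrt (ipH v v).re)
    (hHle : ∀ v : V, normH v ≤ ‖v‖)
    -- the sesquilinear perturbation `b`, bounded with respect to `normH`
    (Cμ : ℝ) (hCμ : 0 < Cμ)
    (b : V →ₗ[ℂ] V →ₛₗ[starRingEnd ℂ] ℂ)
    (hb : ∀ u v : V, ‖b u v‖ ≤ Cμ * normH u * normH v)
    -- the form `a(u,v) = (u,v)_V + b(u,v)`, linear in the first argument
    (a : V → V → ℂ) (ha : ∀ u v : V, a u v = ⟪v, u⟫_ℂ + b u v)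
    (Ccont : ℝ) (hCcont : Ccont = 1 + Cμ)
    -- subspaces `V_1, …, V_N` with Galerkin projections `Q_ℓ`
    {N : ℕ} (Vl : Fin N → Submodule ℂ V) (Ql : Fin N → V → V)
    (hQlmem : ∀ ℓ (v : V), Ql ℓ v ∈ Vl ℓ)
    (hQlgal : ∀ ℓ (v : V), ∀ u ∈ Vl ℓ, a (Ql ℓ v) u = a v u)
    -- a stable splitting of `w`
    (Cs β : ℝ) (hCs : 0 < Cs) (hβ : 0 ≤ β)
    (w : V) (wl : Fin N → V)
    (hmem : ∀ ℓ, wl ℓ ∈ Vl ℓ)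
    (hsplit : w = ∑ ℓ, wl ℓ)
    (hstable : ∑ ℓ, ‖wl ℓ‖ ^ 2 ≤ Cs * (‖w‖ ^ 2 + β * normH w ^ 2)) :
    ‖w‖ ^ 2 ≤ Ccont ^ 2 * Cs * ∑ ℓ, ‖Ql ℓ w‖ ^ 2 + (2 * Cμ + β) * normH w ^ 2 := by
  have hH0 : ∀ v, 0 ≤ normH v := fun v => by rw [hnormH]; exact Real.sqrt_nonneg _
  have hC0 : 0 ≤ Ccont := by rw [hCcont]; linarith
  have hcont : ∀ u v, ‖a u v‖ ≤ Ccont * ‖u‖ * ‖v‖ := by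
    intro u v
    have h1 : ‖b u v‖ ≤ Cμ * ‖u‖ * ‖v‖ := by
      refine (hb u v).trans ?_
      have h2 := hHle u
      have h3 := hHle v
      have h4 := hH0 u
      have h5 := hH0 v
      gcongr
    have h2 : ‖⟪v, u⟫_ℂ‖ ≤ ‖v‖ * ‖u‖ := norm_inner_le_norm v u
    rw [ha, hCcont]
    calc ‖⟪v, u⟫_ℂ + b u v‖ ≤ ‖⟪v, u⟫_ℂ‖ + ‖b u v‖ := norm_add_le _ _
      _ ≤ (1 + Cμ) * ‖u‖ * ‖v‖ := by linarith
  have hgard : ‖w‖ ^ 2 - Cμ * normH w ^ 2 ≤ ‖a w w‖ := by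
    have h1 : (⟪w, w⟫_ℂ).re = ‖w‖ ^ 2 := inner_self_eq_norm_sq (𝕜 := ℂ) w
    have h2 : -‖b w w‖ ≤ (b w w).re := (abs_le.mp (Complex.abs_re_le_norm _)).1
    have h3 := hb w w
    have h4 : (a w w).re ≤ ‖a w w‖ := Complex.re_le_norm _
    have h5 : (a w w).re = ‖w‖ ^ 2 + (b w w).re := by rw [ha, Complex.add_re, h1]
    linarith
  -- Galerkin orthogonality replaces `w` by `Q_ℓ w` when testing against `w_ℓ`.
  have hsum : a w w = ∑ ℓ, a (Ql ℓ w) (wl ℓ) := by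
    have h1 : ∀ v, a v w = ∑ ℓ, a v (wl ℓ) := by
      intro v
      simp only [ha, Finset.sum_add_distrib]
      rw [← sum_inner, ← map_sum, ← hsplit]
    rw [h1]
    exact Finset.sum_congr rfl fun ℓ _ => (hQlgal ℓ w _ (hmem ℓ)).symm
  -- Young's inequality, weighted so that `hstable` yields exactly half of `‖w‖ ^ 2`.
  have hyoung : ∀ x y : ℝ,
      Ccont * x * y ≤ Ccont ^ 2 * Cs / 2 * x ^ 2 + 1 / (2 * Cs) * y ^ 2 := by
    intro x y
    have h : Ccont ^ 2 * Cs / 2 * x ^ 2 + 1 / (2 * Cs) * y ^ 2 - Ccont * x * y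
        = (Ccont * Cs * x - y) ^ 2 / (2 * Cs) := by
      field_simp
      ring
    have h' : 0 ≤ (Ccont * Cs * x - y) ^ 2 / (2 * Cs) := by positivity
    linarith
  have hbound : ‖a w w‖ ≤ Ccont ^ 2 * Cs / 2 * ∑ ℓ, ‖Ql ℓ w‖ ^ 2
      + 1 / (2 * Cs) * ∑ ℓ, ‖wl ℓ‖ ^ 2 := by
    rw [hsum, Finset.mul_sum, Finset.mul_sum, ← Finset.sum_add_distrib]
    refine (norm_sum_le _ _).trans (Finset.sum_le_sum fun ℓ _ => ?_)
    exact (hcont _ _).trans (hyoung _ _)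
  have hstable' : 1 / (2 * Cs) * ∑ ℓ, ‖wl ℓ‖ ^ 2 ≤ (‖w‖ ^ 2 + β * normH w ^ 2) / 2 := by
    calc 1 / (2 * Cs) * ∑ ℓ, ‖wl ℓ‖ ^ 2
        ≤ 1 / (2 * Cs) * (Cs * (‖w‖ ^ 2 + β * normH w ^ 2)) := by gcongr
      _ = (‖w‖ ^ 2 + β * normH w ^ 2) / 2 := by field_simp
  linarith
end

section
/- (Two-level coercivity from a stable splitting.) Let V_0, V_1, …, V_N ⊆ V_h be subspaces on which the Galerkin projections Q_ℓ := Q_{V_ℓ} are well defined. Suppose every v ∈ V_h admits a splitting v = Σ_{ℓ=0}^N v_ℓ with v_ℓ ∈ V_ℓ and Σ_{ℓ=0}^N ‖v_ℓ‖_V² ≤ C_* ‖v‖_V² for some C_* > 0, and that ‖(I − Q_0) v‖_H ≤ σ ‖v‖_V for all v ∈ V_h. Then for all v ∈ V_h, (1 − 4 C_μ σ²) ‖v‖_V² ≤ (C_cont² C_* + 4 C_μ) Σ_{ℓ=0}^N ‖Q_ℓ v‖_V². -/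
/-!
Splitting `v = v₀ + ∑ vₗ` stably and using the Galerkin property on each subspace gives
`a(v, v) = a(Q₀ v, v₀) + ∑ a(Qₗ v, vₗ)`, so boundedness of `a` and Young's inequality weighted by
`C_*` (`norm_mul_le_of_young`) bound `Re a(v, v)` by
`½ C_cont² C_* ∑ ‖Qₗ v‖² + ½ ‖v‖²`. Conversely `Re a(v, v) ≥ ‖v‖² - C_μ ‖v‖_H²`, and writing
`v = (v - Q₀ v) + Q₀ v` gives `‖v‖_H² ≤ 2 σ² ‖v‖² + 2 ‖Q₀ v‖²`. Combining the two proves the claim.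

The hypotheses on the `H`-form are Hermitian symmetry and anisotropy, not positivity. This suffices:
an anisotropic Hermitian form does not change sign (`re_nonneg_of_exists_pos`), so the
bound `‖x + y‖_H² ≤ 2 ‖x‖_H² + 2 ‖y‖_H²` follows from the parallelogram law
(`sqrt_re_add_sq_le`), where a negative form has `‖·‖_H = 0`.
-/

open Finset
open scoped InnerProductSpace

/-- An anisotropic Hermitian form that is positive somewhere is nowhere negative: otherwise the real
quadratic `t ↦ ip (x + t y) (x + t y)` would vanish for some `t`. -/
theorem re_nonneg_of_exists_pos {V : Type*} [AddCommGroup V] [Module ℂ V]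
    (ip : V →ₗ[ℂ] V →ₛₗ[starRingEnd ℂ] ℂ)
    (hsymm : ∀ u v : V, ip u v = starRingEnd ℂ (ip v u))
    (hdef : ∀ v : V, ip v v = 0 → v = 0) {x y : V} (hx : 0 < (ip x x).re) :
    0 ≤ (ip y y).re := by
  by_contra! hy
  have him : ∀ v : V, (ip v v).im = 0 := fun v => by
    have := congrArg Complex.im (hsymm v v)
    simp only [Complex.conj_im] at this
    linarith
  have hre : (ip y x).re = (ip x y).re := by
    rw [hsymm y x, Complex.conj_re]
  have hdisc : 0 ≤ discrim (ip y y).re (2 * (ip x y).re) (ip x x).re := by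
    unfold discrim
    nlinarith [sq_nonneg (2 * (ip x y).re), mul_pos hx (neg_pos.2 hy)]
  obtain ⟨t, ht⟩ := exists_quadratic_eq_zero hy.ne
    ⟨_, (Real.mul_self_sqrt hdisc).symm⟩
  have hzero : x + (t : ℂ) • y = 0 := by
    apply hdef
    apply Complex.ext
    · simp only [map_add, map_smul, map_smulₛₗ, LinearMap.add_apply, LinearMap.smul_apply,
        smul_eq_mul, Complex.add_re, Complex.conj_ofReal, Complex.re_ofReal_mul, Complex.zero_re]
      rw [hre]
      linarith
    · exact him _
  have hxy : x = (-t : ℂ) • y := by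
    rw [neg_smul]
    exact eq_neg_of_add_eq_zero_left hzero
  have hval : (ip x x).re = t * t * (ip y y).re := by
    rw [hxy]
    simp only [map_smulₛₗ, map_neg, LinearMap.smul_apply, neg_smul, LinearMap.neg_apply,
      smul_eq_mul, Complex.conj_ofReal, Complex.re_ofReal_mul, Complex.neg_re, RingHom.id_apply]
    ring
  nlinarith [mul_self_nonneg t]

theorem sqrt_re_add_sq_le {V : Type*} [AddCommGroup V] [Module ℂ V]
    (ip : V →ₗ[ℂ] V →ₛₗ[starRingEnd ℂ] ℂ)
    (hsymm : ∀ u v : V, ip u v = starRingEnd ℂ (ip v u))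
    (hdef : ∀ v : V, ip v v = 0 → v = 0) (x y : V) :
    Real.sqrt (ip (x + y) (x + y)).re ^ 2
      ≤ 2 * Real.sqrt (ip x x).re ^ 2 + 2 * Real.sqrt (ip y y).re ^ 2 := by
  rcases le_or_gt (ip (x + y) (x + y)).re 0 with h | h
  · rw [Real.sqrt_eq_zero_of_nonpos h, zero_pow two_ne_zero]
    positivity
  · have hpos := fun z : V => re_nonneg_of_exists_pos ip hsymm hdef (y := z) h
    rw [Real.sq_sqrt (hpos _), Real.sq_sqrt (hpos _), Real.sq_sqrt (hpos _)]
    have hpar : (ip (x + y) (x + y)).re + (ip (x - y) (x - y)).re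
        = 2 * (ip x x).re + 2 * (ip y y).re := by
      simp only [map_add, map_sub, LinearMap.add_apply, LinearMap.sub_apply, Complex.add_re,
        Complex.sub_re]
      ring
    linarith [hpos (x - y)]

theorem norm_mul_le_of_young {C s : ℝ} (hs : 0 < s) (p q : ℝ) :
    C * p * q ≤ (C ^ 2 * s * p ^ 2 + q ^ 2 / s) / 2 := by
  have h : C ^ 2 * s * p ^ 2 + q ^ 2 / s - 2 * (C * p * q) = (C * s * p - q) ^ 2 / s := by
    field_simp
    ring
  have : 0 ≤ (C * s * p - q) ^ 2 / s := by positivity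
  linarith

/-- (Two-level coercivity from a stable splitting.) If every `v`
admits a splitting `v = ∑_{ℓ=0}^N v_ℓ` with `∑_ℓ ‖v_ℓ‖_V² ≤ C_* ‖v‖_V²`, and
`‖(I - Q₀)v‖_H ≤ σ ‖v‖_V`, then
`(1 - 4C_μσ²)‖v‖_V² ≤ (C_cont² C_* + 4C_μ) ∑_{ℓ=0}^N ‖Q_ℓ v‖_V²`. -/
theorem two_level_coercivity_from_stable_splitting
    {V : Type*} [NormedAddCommGroup V] [InnerProductSpace ℂ V] [FiniteDimensional ℂ V]
    -- a second inner product `(·,·)_H` (linear in the first argument, conjugate-linear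
    -- in the second) with norm `normH`, dominated by the `V`-norm `‖·‖`
    (ipH : V →ₗ[ℂ] V →ₛₗ[starRingEnd ℂ] ℂ)
    (hHsymm : ∀ u v : V, ipH u v = starRingEnd ℂ (ipH v u))
    (hHdef : ∀ v : V, ipH v v = 0 → v = 0)
    (normH : V → ℝ) (hnormH : ∀ v : V, normH v = Real.sqrt (ipH v v).re)
    (hHle : ∀ v : V, normH v ≤ ‖v‖)
    -- the sesquilinear perturbation `b`, bounded with respect to `normH`
    (Cμ : ℝ) (hCμ : 0 < Cμ)
    (b : V →ₗ[ℂ] V →ₛₗ[starRingEnd ℂ] ℂ)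
    (hb : ∀ u v : V, ‖b u v‖ ≤ Cμ * normH u * normH v)
    -- the form `a(u,v) = (u,v)_V + b(u,v)`, linear in the first argument
    (a : V → V → ℂ) (ha : ∀ u v : V, a u v = ⟪v, u⟫_ℂ + b u v)
    (Ccont : ℝ) (hCcont : Ccont = 1 + Cμ)
    -- subspaces `V_0, V_1, …, V_N` with Galerkin projections `Q_0, Q_ℓ`
    {N : ℕ} (V0 : Submodule ℂ V) (Vl : Fin N → Submodule ℂ V)
    (Q0 : V → V) (Ql : Fin N → V → V)
    (hQ0mem : ∀ v : V, Q0 v ∈ V0)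
    (hQ0gal : ∀ v : V, ∀ w ∈ V0, a (Q0 v) w = a v w)
    (hQlmem : ∀ ℓ (v : V), Ql ℓ v ∈ Vl ℓ)
    (hQlgal : ∀ ℓ (v : V), ∀ w ∈ Vl ℓ, a (Ql ℓ v) w = a v w)
    -- a two-level stable splitting
    (Cs : ℝ) (hCs : 0 < Cs)
    (hsplit : ∀ v : V, ∃ (v0 : V) (vl : Fin N → V),
      v0 ∈ V0 ∧ (∀ ℓ, vl ℓ ∈ Vl ℓ) ∧ v = v0 + ∑ ℓ, vl ℓ ∧
        ‖v0‖ ^ 2 + ∑ ℓ, ‖vl ℓ‖ ^ 2 ≤ Cs * ‖v‖ ^ 2)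
    -- the coarse-space approximation property
    (σ : ℝ) (hσpos : 0 < σ)
    (hσ : ∀ v : V, normH (v - Q0 v) ≤ σ * ‖v‖) :
    ∀ v : V,
      (1 - 4 * Cμ * σ ^ 2) * ‖v‖ ^ 2
        ≤ (Ccont ^ 2 * Cs + 4 * Cμ) * (‖Q0 v‖ ^ 2 + ∑ ℓ, ‖Ql ℓ v‖ ^ 2) := by
  intro v
  have hH0 : ∀ u, 0 ≤ normH u := fun u => by rw [hnormH]; exact Real.sqrt_nonneg _
  have hbound : ∀ u w, (a u w).re ≤ Ccont * ‖u‖ * ‖w‖ := fun u w => by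
    have hbuw : ‖b u w‖ ≤ Cμ * ‖u‖ * ‖w‖ := by
      refine (hb u w).trans ?_
      have := hH0 u
      have := hH0 w
      gcongr <;> exact hHle _
    have hVuw : ‖⟪w, u⟫_ℂ‖ ≤ ‖w‖ * ‖u‖ := norm_inner_le_norm w u
    have h1 := Complex.re_le_norm (b u w)
    have h2 := Complex.re_le_norm (⟪w, u⟫_ℂ)
    rw [ha, Complex.add_re, hCcont]
    linarith
  obtain ⟨v0, vl, hv0, hvl, hv, hstab⟩ := hsplit v
  have hadd : a v v = a v v0 + ∑ ℓ, a v (vl ℓ) := by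
    have hlin : ∀ w, a v w = ⟪w, v⟫_ℂ + b v w := ha v
    simp only [hlin, Finset.sum_add_distrib, ← sum_inner, ← map_sum]
    rw [add_add_add_comm, ← inner_add_left, ← map_add, ← hv]
  have hupper : (a v v).re
      ≤ (Ccont ^ 2 * Cs * (‖Q0 v‖ ^ 2 + ∑ ℓ, ‖Ql ℓ v‖ ^ 2) + ‖v‖ ^ 2) / 2 := by
    have h0 : (a v v0).re ≤ (Ccont ^ 2 * Cs * ‖Q0 v‖ ^ 2 + ‖v0‖ ^ 2 / Cs) / 2 := by
      rw [← hQ0gal v v0 hv0]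
      exact (hbound _ _).trans (norm_mul_le_of_young hCs _ _)
    have hl : ∑ ℓ, (a v (vl ℓ)).re
        ≤ ∑ ℓ, (Ccont ^ 2 * Cs * ‖Ql ℓ v‖ ^ 2 + ‖vl ℓ‖ ^ 2 / Cs) / 2 := by
      refine Finset.sum_le_sum fun ℓ _ => ?_
      rw [← hQlgal ℓ v _ (hvl ℓ)]
      exact (hbound _ _).trans (norm_mul_le_of_young hCs _ _)
    rw [← Finset.sum_div, Finset.sum_add_distrib, ← Finset.mul_sum, ← Finset.sum_div] at hl
    have hstab' : ‖v0‖ ^ 2 / Cs + (∑ ℓ, ‖vl ℓ‖ ^ 2) / Cs ≤ ‖v‖ ^ 2 := by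
      rw [← add_div, div_le_iff₀ hCs]
      linarith
    rw [hadd, Complex.add_re, Complex.re_sum]
    linarith
  have hlower : ‖v‖ ^ 2 - Cμ * normH v ^ 2 ≤ (a v v).re := by
    have h1 := (abs_le.1 ((Complex.abs_re_le_norm (b v v)).trans (hb v v))).1
    have h2 : (⟪v, v⟫_ℂ).re = ‖v‖ ^ 2 := inner_self_eq_norm_sq (𝕜 := ℂ) v
    rw [ha, Complex.add_re, h2]
    linarith
  have hHv : normH v ^ 2 ≤ 2 * (σ ^ 2 * ‖v‖ ^ 2) + 2 * ‖Q0 v‖ ^ 2 := by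
    have h := sqrt_re_add_sq_le ipH hHsymm hHdef (v - Q0 v) (Q0 v)
    rw [sub_add_cancel, ← hnormH, ← hnormH, ← hnormH] at h
    have h1 := pow_le_pow_left₀ (hH0 _) (hσ v) 2
    have h2 := pow_le_pow_left₀ (hH0 _) (hHle (Q0 v)) 2
    rw [mul_pow] at h1
    linarith
  have hμ := mul_le_mul_of_nonneg_left hHv hCμ.le
  have hS : 0 ≤ Cμ * ∑ ℓ, ‖Ql ℓ v‖ ^ 2 := by positivity
  linarith
end

section
/- (Upper bound for the additive Schwarz operator.) Let V_0, V_1, …, V_N ⊆ V_h be subspaces on which the Galerkin projections Q_ℓ := Q_{V_ℓ} are well defined, and let Λ ≥ 1, C_{Q0}, C_sub > 0. Suppose: (i) ‖(I − Q_0) v‖_V ≤ C_{Q0} ‖v‖_V for all v ∈ V_h; (ii) there are seminorms p_1, …, p_N on V_h with p_ℓ(w) = ‖w‖_V for all w ∈ V_ℓ, Σ_{ℓ=1}^N p_ℓ(v)² ≤ Λ ‖v‖_V² for all v ∈ V_h, and ‖Σ_{ℓ=1}^N v_ℓ‖_V² ≤ 2 Λ Σ_{ℓ=1}^N p_ℓ(v_ℓ)²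 whenever v_ℓ ∈ V_ℓ for each ℓ; (iii) p_ℓ(Q_ℓ v) ≤ C_sub p_ℓ(v) for all v ∈ V_h and ℓ = 1, …, N. Then Q^a := Σ_{ℓ=0}^N Q_ℓ satisfies ‖Q^a v‖_V ≤ ( (1 + C_{Q0}) + √2 Λ C_sub ) ‖v‖_V for all v ∈ V_h. -/
/-!
The coarse component is bounded by the triangle inequality applied to `Q₀ v = v - (v - Q₀ v)`.
For the sum of the local components, the colouring inequality reduces its norm to the local
seminorms of `Q_ℓ v`; local stability replaces these by the seminorms of `v`, and finite overlap
sums them up to `Λ ‖v‖²`.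
-/

open Finset
open scoped InnerProductSpace

/-- Upper bound for the additive Schwarz operator:
`‖Q^a v‖_V ≤ ((1 + C_{Q0}) + √2 Λ C_sub) ‖v‖_V`. -/
theorem additive_schwarz_upper_bound
    {V : Type*} [NormedAddCommGroup V] [InnerProductSpace ℂ V] [FiniteDimensional ℂ V]
    -- a second inner product `(·,·)_H` (linear in the first argument, conjugate-linear
    -- in the second) with norm `normH`, dominated by the `V`-norm `‖·‖`
    (ipH : V →ₗ[ℂ] V →ₛₗ[starRingEnd ℂ] ℂ)
    (hHsymm : ∀ u v : V, ipH u v = starRingEnd ℂ (ipH v u))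
    (hHdef : ∀ v : V, ipH v v = 0 → v = 0)
    (normH : V → ℝ) (hnormH : ∀ v : V, normH v = Real.sqrt (ipH v v).re)
    (hHle : ∀ v : V, normH v ≤ ‖v‖)
    -- the sesquilinear perturbation `b`, bounded with respect to `normH`
    (Cμ : ℝ) (hCμ : 0 < Cμ)
    (b : V →ₗ[ℂ] V →ₛₗ[starRingEnd ℂ] ℂ)
    (hb : ∀ u v : V, ‖b u v‖ ≤ Cμ * normH u * normH v)
    -- the form `a(u,v) = (u,v)_V + b(u,v)`, linear in the first argument
    (a : V → V → ℂ) (ha : ∀ u v : V, a u v = ⟪v, u⟫_ℂ + b u v)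
    (Ccont : ℝ) (hCcont : Ccont = 1 + Cμ)
    -- subspaces `V_0, V_1, …, V_N` with Galerkin projections `Q_0, Q_ℓ`
    {N : ℕ} (V0 : Submodule ℂ V) (Vl : Fin N → Submodule ℂ V)
    (Q0 : V →ₗ[ℂ] V) (Ql : Fin N → V →ₗ[ℂ] V)
    (hQ0mem : ∀ v : V, Q0 v ∈ V0)
    (hQ0gal : ∀ v : V, ∀ w ∈ V0, a (Q0 v) w = a v w)
    (hQlmem : ∀ ℓ (v : V), Ql ℓ v ∈ Vl ℓ)
    (hQlgal : ∀ ℓ (v : V), ∀ w ∈ Vl ℓ, a (Ql ℓ v) w = a v w)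
    -- the constants and the local seminorms
    (Λ CQ0 Csub : ℝ) (hΛ : 1 ≤ Λ) (hCQ0 : 0 < CQ0) (hCsub : 0 < Csub)
    (hQ0bd : ∀ v : V, ‖v - Q0 v‖ ≤ CQ0 * ‖v‖)
    (p : Fin N → Seminorm ℂ V)
    (hploc : ∀ ℓ, ∀ w ∈ Vl ℓ, p ℓ w = ‖w‖)
    (hpsum : ∀ v : V, ∑ ℓ, p ℓ v ^ 2 ≤ Λ * ‖v‖ ^ 2)
    (hpcoloring : ∀ vl : Fin N → V, (∀ ℓ, vl ℓ ∈ Vl ℓ) →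
      ‖∑ ℓ, vl ℓ‖ ^ 2 ≤ 2 * Λ * ∑ ℓ, p ℓ (vl ℓ) ^ 2)
    (hQlbd : ∀ ℓ (v : V), p ℓ (Ql ℓ v) ≤ Csub * p ℓ v) :
    ∀ v : V, ‖Q0 v + ∑ ℓ, Ql ℓ v‖ ≤ ((1 + CQ0) + Real.sqrt 2 * Λ * Csub) * ‖v‖ := by
  intro v
  have hΛ0 : 0 ≤ Λ := zero_le_one.trans hΛ
  have hcoarse : ‖Q0 v‖ ≤ (1 + CQ0) * ‖v‖ := by
    have h := norm_sub_le v (v - Q0 v)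
    rw [sub_sub_cancel] at h
    linarith [hQ0bd v]
  -- Colouring, local stability and finite overlap each act on squared norms; the two factors
  -- of `Λ` combine so that the square root of the final bound carries `√2 Λ`.
  have hlocal : ‖∑ ℓ, Ql ℓ v‖ ≤ Real.sqrt 2 * Λ * Csub * ‖v‖ := by
    refine (sq_le_sq₀ (norm_nonneg _) (by positivity)).1 ?_
    calc ‖∑ ℓ, Ql ℓ v‖ ^ 2
        ≤ 2 * Λ * ∑ ℓ, p ℓ (Ql ℓ v) ^ 2 := hpcoloring _ fun ℓ => hQlmem ℓ v
      _ ≤ 2 * Λ * ∑ ℓ, (Csub * p ℓ v) ^ 2 := by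
          gcongr with ℓ
          exact hQlbd ℓ v
      _ = 2 * Λ * (Csub ^ 2 * ∑ ℓ, p ℓ v ^ 2) := by
          simp only [mul_pow, Finset.mul_sum]
      _ ≤ 2 * Λ * (Csub ^ 2 * (Λ * ‖v‖ ^ 2)) := by
          gcongr
          exact hpsum v
      _ = (Real.sqrt 2 * Λ * Csub * ‖v‖) ^ 2 := by
          simp only [mul_pow, Real.sq_sqrt (zero_le_two : (0 : ℝ) ≤ 2)]
          ring
  linarith [norm_add_le (Q0 v) (∑ ℓ, Ql ℓ v)]
end

section
/- (Upper bound for the hybrid Schwarz operator.) Let V_0, V_1, …, V_N ⊆ V_h be subspaces on which the Galerkin projections Q_ℓ := Q_{V_ℓ} are well defined, and let Λ ≥ 1, C_{Q0}, C_sub > 0. Suppose: (i) ‖(I − Q_0) v‖_V ≤ C_{Q0} ‖v‖_V for all v ∈ V_h; (ii) there are seminorms p_1, …, p_N on V_h with p_ℓ(w) = ‖w‖_V for all w ∈ V_ℓ, Σ_{ℓ=1}^N p_ℓ(v)² ≤ Λ ‖v‖_V² for all v ∈ V_h, and ‖Σ_{ℓ=1}^N v_ℓ‖_V² ≤ 2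 Λ Σ_{ℓ=1}^N p_ℓ(v_ℓ)² whenever v_ℓ ∈ V_ℓ for each ℓ; (iii) p_ℓ(Q_ℓ v) ≤ C_sub p_ℓ(v) for all v ∈ V_h and ℓ = 1, …, N. Then Q^h := Q_0 + (I − Q_0)* (Σ_{ℓ=1}^N Q_ℓ)(I − Q_0), where (I − Q_0)* is the (·,·)_V-adjoint of I − Q_0, satisfies ‖Q^h v‖_V ≤ ( (1 + C_{Q0}) + √2 Λ C_sub C_{Q0}² ) ‖v‖_V for all v ∈ V_h. -/
/-!
The triangle inequality splits `Q^h v` into `Q₀ v` and `(I - Q₀)* (∑ Q_ℓ) w` with `w = (I - Q₀) v`.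
The first part is at most `(1 + C_{Q0}) ‖v‖`. For the second, the coloring bound, the local
stability of each `Q_ℓ` and the finite overlap give `‖∑ Q_ℓ w‖ ≤ √2 Λ C_sub ‖w‖`
(`norm_sum_local_le`); each of `I - Q₀` and its adjoint (`norm_adjoint_apply_le`) then
contributes one factor `C_{Q0}`.
-/

open Finset
open scoped InnerProductSpace

/-- The adjoint inherits any operator-norm bound:
`‖T* x‖² = ⟪x, T T* x⟫ ≤ C ‖x‖ ‖T* x‖`. -/
theorem norm_adjoint_apply_le {V : Type*} [NormedAddCommGroup V] [InnerProductSpace ℂ V]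
    [FiniteDimensional ℂ V] (T : V →ₗ[ℂ] V) {C : ℝ} (hC : 0 ≤ C)
    (hT : ∀ v, ‖T v‖ ≤ C * ‖v‖) (x : V) :
    ‖LinearMap.adjoint T x‖ ≤ C * ‖x‖ := by
  set y := LinearMap.adjoint T x with hy
  have h1 : ‖y‖ * ‖y‖ ≤ ‖y‖ * (C * ‖x‖) := by
    calc ‖y‖ * ‖y‖ = ‖⟪y, y⟫_ℂ‖ := by
          rw [inner_self_eq_norm_sq_to_K]; simp [pow_two]
      _ = ‖⟪x, T y⟫_ℂ‖ := by
          conv_lhs => rw [hy, LinearMap.adjoint_inner_left, ← hy]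
      _ ≤ ‖x‖ * ‖T y‖ := norm_inner_le_norm _ _
      _ ≤ ‖x‖ * (C * ‖y‖) := by gcongr; exact hT y
      _ = ‖y‖ * (C * ‖x‖) := by ring
  rcases (norm_nonneg y).eq_or_lt with h0 | h0
  · rw [← h0]; positivity
  · exact le_of_mul_le_mul_left h1 h0

/-- Norm bound for the additive one-level part: coloring, local stability and finite overlap
each enter once. -/
theorem norm_sum_local_le {V : Type*} [NormedAddCommGroup V] [InnerProductSpace ℂ V]
    {N : ℕ} (Vl : Fin N → Submodule ℂ V) (Ql : Fin N → V →ₗ[ℂ] V)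
    (hQlmem : ∀ ℓ (v : V), Ql ℓ v ∈ Vl ℓ)
    {Λ Csub : ℝ} (hΛ : 0 ≤ Λ) (hCsub : 0 ≤ Csub)
    (p : Fin N → Seminorm ℂ V)
    (hpsum : ∀ v : V, ∑ ℓ, p ℓ v ^ 2 ≤ Λ * ‖v‖ ^ 2)
    (hpcoloring : ∀ vl : Fin N → V, (∀ ℓ, vl ℓ ∈ Vl ℓ) →
      ‖∑ ℓ, vl ℓ‖ ^ 2 ≤ 2 * Λ * ∑ ℓ, p ℓ (vl ℓ) ^ 2)
    (hQlbd : ∀ ℓ (v : V), p ℓ (Ql ℓ v) ≤ Csub * p ℓ v) (w : V) :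
    ‖∑ ℓ, Ql ℓ w‖ ≤ Real.sqrt 2 * Λ * Csub * ‖w‖ := by
  refine (sq_le_sq₀ (norm_nonneg _) (by positivity)).1 ?_
  calc ‖∑ ℓ, Ql ℓ w‖ ^ 2 ≤ 2 * Λ * ∑ ℓ, p ℓ (Ql ℓ w) ^ 2 :=
        hpcoloring _ fun ℓ => hQlmem ℓ w
    _ ≤ 2 * Λ * ∑ ℓ, (Csub * p ℓ w) ^ 2 := by
        gcongr with ℓ
        exact hQlbd ℓ w
    _ = 2 * Λ * Csub ^ 2 * ∑ ℓ, p ℓ w ^ 2 := by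
        simp_rw [mul_pow]; rw [← Finset.mul_sum]; ring
    _ ≤ 2 * Λ * Csub ^ 2 * (Λ * ‖w‖ ^ 2) := by gcongr; exact hpsum w
    _ = (Real.sqrt 2 * Λ * Csub * ‖w‖) ^ 2 := by
        simp only [mul_pow, Real.sq_sqrt zero_le_two]; ring

/-- Upper bound for the hybrid Schwarz operator
`Q^h = Q₀ + (I - Q₀)* (∑_{ℓ=1}^N Q_ℓ)(I - Q₀)`:
`‖Q^h v‖_V ≤ ((1 + C_{Q0}) + √2 Λ C_sub C_{Q0}²) ‖v‖_V`. -/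
theorem hybrid_schwarz_upper_bound
    {V : Type*} [NormedAddCommGroup V] [InnerProductSpace ℂ V] [FiniteDimensional ℂ V]
    -- a second inner product `(·,·)_H` (linear in the first argument, conjugate-linear
    -- in the second) with norm `normH`, dominated by the `V`-norm `‖·‖`
    (ipH : V →ₗ[ℂ] V →ₛₗ[starRingEnd ℂ] ℂ)
    (hHsymm : ∀ u v : V, ipH u v = starRingEnd ℂ (ipH v u))
    (hHdef : ∀ v : V, ipH v v = 0 → v = 0)
    (normH : V → ℝ) (hnormH : ∀ v : V, normH v = Real.sqrt (ipH v v).re)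
    (hHle : ∀ v : V, normH v ≤ ‖v‖)
    -- the sesquilinear perturbation `b`, bounded with respect to `normH`
    (Cμ : ℝ) (hCμ : 0 < Cμ)
    (b : V →ₗ[ℂ] V →ₛₗ[starRingEnd ℂ] ℂ)
    (hb : ∀ u v : V, ‖b u v‖ ≤ Cμ * normH u * normH v)
    -- the form `a(u,v) = (u,v)_V + b(u,v)`, linear in the first argument
    (a : V → V → ℂ) (ha : ∀ u v : V, a u v = ⟪v, u⟫_ℂ + b u v)
    (Ccont : ℝ) (hCcont : Ccont = 1 + Cμ)
    -- subspaces `V_0, V_1, …, V_N` with Galerkin projections `Q_0, Q_ℓ`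
    {N : ℕ} (V0 : Submodule ℂ V) (Vl : Fin N → Submodule ℂ V)
    (Q0 : V →ₗ[ℂ] V) (Ql : Fin N → V →ₗ[ℂ] V)
    (hQ0mem : ∀ v : V, Q0 v ∈ V0)
    (hQ0gal : ∀ v : V, ∀ w ∈ V0, a (Q0 v) w = a v w)
    (hQlmem : ∀ ℓ (v : V), Ql ℓ v ∈ Vl ℓ)
    (hQlgal : ∀ ℓ (v : V), ∀ w ∈ Vl ℓ, a (Ql ℓ v) w = a v w)
    -- the constants and the local seminorms
    (Λ CQ0 Csub : ℝ) (hΛ : 1 ≤ Λ) (hCQ0 : 0 < CQ0) (hCsub : 0 < Csub)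
    (hQ0bd : ∀ v : V, ‖v - Q0 v‖ ≤ CQ0 * ‖v‖)
    (p : Fin N → Seminorm ℂ V)
    (hploc : ∀ ℓ, ∀ w ∈ Vl ℓ, p ℓ w = ‖w‖)
    (hpsum : ∀ v : V, ∑ ℓ, p ℓ v ^ 2 ≤ Λ * ‖v‖ ^ 2)
    (hpcoloring : ∀ vl : Fin N → V, (∀ ℓ, vl ℓ ∈ Vl ℓ) →
      ‖∑ ℓ, vl ℓ‖ ^ 2 ≤ 2 * Λ * ∑ ℓ, p ℓ (vl ℓ) ^ 2)
    (hQlbd : ∀ ℓ (v : V), p ℓ (Ql ℓ v) ≤ Csub * p ℓ v) :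
    ∀ v : V,
      ‖Q0 v + LinearMap.adjoint ((1 : V →ₗ[ℂ] V) - Q0) (∑ ℓ, Ql ℓ (v - Q0 v))‖
        ≤ ((1 + CQ0) + Real.sqrt 2 * Λ * Csub * CQ0 ^ 2) * ‖v‖ := by
  intro v
  have hQ0 : ‖Q0 v‖ ≤ (1 + CQ0) * ‖v‖ := by
    calc ‖Q0 v‖ = ‖v - (v - Q0 v)‖ := by rw [sub_sub_cancel]
      _ ≤ ‖v‖ + ‖v - Q0 v‖ := norm_sub_le _ _
      _ ≤ (1 + CQ0) * ‖v‖ := by linarith [hQ0bd v]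
  have hadj := norm_adjoint_apply_le ((1 : V →ₗ[ℂ] V) - Q0) hCQ0.le
    (fun u => by simpa using hQ0bd u) (∑ ℓ, Ql ℓ (v - Q0 v))
  have hsum := norm_sum_local_le Vl Ql hQlmem (zero_le_one.trans hΛ) hCsub.le p hpsum
    hpcoloring hQlbd (v - Q0 v)
  calc _ ≤ ‖Q0 v‖ + ‖LinearMap.adjoint ((1 : V →ₗ[ℂ] V) - Q0) (∑ ℓ, Ql ℓ (v - Q0 v))‖ :=
        norm_add_le _ _
    _ ≤ (1 + CQ0) * ‖v‖ + CQ0 * (Real.sqrt 2 * Λ * Csub * (CQ0 * ‖v‖)) := by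
        refine add_le_add hQ0 (hadj.trans ?_)
        gcongr
        refine hsum.trans ?_
        gcongr
        exact hQ0bd v
    _ = _ := by ring
end

section
/- (Lower bound on the field of values of the additive Schwarz operator.) Let V_0, V_1, …, V_N ⊆ V_h be subspaces on which the Galerkin projections Q_ℓ := Q_{V_ℓ} are well defined, and let Λ ≥ 1, C_*, σ, κ > 0. Suppose: (i) every v ∈ V_h admits a splitting v = Σ_{ℓ=0}^N v_ℓ with v_ℓ ∈ V_ℓ and Σ_{ℓ=0}^N ‖v_ℓ‖_V² ≤ C_* ‖v‖_V²; (ii) ‖(I − Q_0) v‖_H ≤ σ ‖v‖_V for all v ∈ V_h; (iii) there are seminorms p_1, …, p_N on V_h with Σ_{ℓ=1}^N p_ℓ(v)² ≤ Λ ‖v‖_V² for all v ∈ V_h, and |((I − Q_ℓ) v, Q_ℓ v)_V| ≤ κ p_ℓ(v) ‖Q_ℓ v‖_V for all v ∈ V_h and ℓ = 1, …, N. If 4 C_μ σ² ≤ 1/2 and (C_μ σ + κ √Λ)² ≤ (4 (C_cont² C_* + 4 C_μ))^{-1}, then for all v ∈ V_h, |(v, Q^a v)_V| ≥ (8 (C_cont²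 C_* + 4 C_μ))^{-1} ‖v‖_V², where Q^a := Σ_{ℓ=0}^N Q_ℓ. -/
open Finset
open scoped InnerProductSpace

/-!
Put `S = ‖Q₀ v‖² + ∑ ‖Q_ℓ v‖²` and `K = C_cont² C_* + 4 C_μ`. The bound follows from two estimates.

* `S` controls `v`: testing `a(v, v)` against the stable splitting and using Galerkin orthogonality
  gives `|a(v, v)| ≤ C_cont ∑ ‖Q_ℓ v‖ ‖v_ℓ‖`. The Gårding inequality loses `C_μ ‖v‖_H²`, and
  `‖v‖_H² ≤ 2 ‖v - Q₀ v‖_H² + 2 ‖Q₀ v‖_H²` is absorbed by the coarse approximation property and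
  by `S`. This yields `‖v‖² ≤ 2 K S`.
* `(v, Q^a v)_V` is close to `S`: the error `∑ ((I - Q_ℓ) v, Q_ℓ v)_V` is at most
  `τ ‖v‖ √S` with `τ = C_μ σ + κ √Λ`, where the `ℓ = 0` term equals `-b((I - Q₀) v, Q₀ v)`
  up to conjugation.

Since `τ² ≤ 1 / (4 K)`, these give `|(v, Q^a v)_V| ≥ S / 2 - ‖v‖² / (8 K) ≥ ‖v‖² / (8 K)`.

The form `(·,·)_H` is only assumed Hermitian and anisotropic. Such a form is semidefinite of one
sign (`hermitian_sign`), which is all that the quasi-triangle inequality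
`normH_sq_add_le` needs.
-/

/-- An anisotropic Hermitian form does not change sign: otherwise its real quadratic restriction to
the line `x + t y` would have a root, giving an isotropic vector. -/
lemma hermitian_sign {V : Type*} [AddCommGroup V] [Module ℂ V]
    (h : V →ₗ[ℂ] V →ₛₗ[starRingEnd ℂ] ℂ)
    (hsymm : ∀ u v : V, h u v = starRingEnd ℂ (h v u))
    (hdef : ∀ v : V, h v v = 0 → v = 0) :
    (∀ v, 0 ≤ (h v v).re) ∨ (∀ v, (h v v).re ≤ 0) := by
  by_contra! hcon
  obtain ⟨⟨y, hy⟩, ⟨x, hx⟩⟩ := hcon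
  have him : ∀ v, (h v v).im = 0 := fun v => by
    have := congrArg Complex.im (hsymm v v)
    simp only [Complex.conj_im] at this
    linarith
  have hre : (h y x).re = (h x y).re := by
    have := congrArg Complex.re (hsymm y x)
    simpa using this
  have hreal : ∀ (u w : V) (s : ℝ), h u ((s : ℂ) • w) = s * h u w := fun u w s => by
    rw [map_smulₛₗ, Complex.conj_ofReal, smul_eq_mul]
  set A := (h x x).re
  set C := (h y y).re
  set B := (h x y).re
  have hdisc : 0 ≤ B ^ 2 - A * C := by nlinarith [sq_nonneg B, mul_pos hx (neg_pos.mpr hy)]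
  obtain ⟨t, ht⟩ : ∃ t : ℝ, A + 2 * t * B + t ^ 2 * C = 0 := by
    refine ⟨(-B + √(B ^ 2 - A * C)) / C, ?_⟩
    have hs := Real.sq_sqrt hdisc
    have hC : C ≠ 0 := hy.ne
    field_simp
    linear_combination hs
  have hexp : (h (x + (t : ℂ) • y) (x + (t : ℂ) • y)).re = A + 2 * t * B + t ^ 2 * C := by
    have hre' : (h y x).re = (h x y).re := hre
    change _ = (h x x).re + 2 * t * (h x y).re + t ^ 2 * (h y y).re
    simp only [map_add, LinearMap.add_apply, map_smul, LinearMap.smul_apply, hreal, smul_eq_mul,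
      Complex.add_re, Complex.re_ofReal_mul, hre']
    ring
  have hz : x + (t : ℂ) • y = 0 := hdef _ (Complex.ext (by rw [hexp, ht]; rfl) (him _))
  have hxy : x = (-t : ℂ) • y := by
    rw [neg_smul]; exact eq_neg_of_add_eq_zero_left hz
  have hA : A = t ^ 2 * C := by
    have : h x x = ((t ^ 2 : ℝ) : ℂ) * h y y := by
      rw [hxy]
      simp only [← Complex.ofReal_neg, map_smul, LinearMap.smul_apply, hreal, smul_eq_mul]
      push_cast
      ring
    have h2 := congrArg Complex.re this
    rwa [Complex.re_ofReal_mul] at h2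
  nlinarith [sq_nonneg t]

/-- The inequality `‖u + w‖_H² ≤ 2 ‖u‖_H² + 2 ‖w‖_H²`: the parallelogram law if the form is
positive, and trivial (the square root of a negative real being `0`) if it is negative. -/
lemma normH_sq_add_le {V : Type*} [AddCommGroup V] [Module ℂ V]
    (h : V →ₗ[ℂ] V →ₛₗ[starRingEnd ℂ] ℂ)
    (hsymm : ∀ u v : V, h u v = starRingEnd ℂ (h v u))
    (hdef : ∀ v : V, h v v = 0 → v = 0) (u w : V) :
    √(h (u + w) (u + w)).re ^ 2 ≤ 2 * √(h u u).re ^ 2 + 2 * √(h w w).re ^ 2 := by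
  rcases hermitian_sign h hsymm hdef with hp | hn
  · rw [Real.sq_sqrt (hp _), Real.sq_sqrt (hp _), Real.sq_sqrt (hp _)]
    have hpar : (h (u + w) (u + w)).re + (h (u - w) (u - w)).re
        = 2 * (h u u).re + 2 * (h w w).re := by
      simp [map_add, map_sub]
      ring
    linarith [hp (u - w)]
  · rw [Real.sqrt_eq_zero_of_nonpos (hn (u + w))]
    rw [zero_pow two_ne_zero]
    positivity

/-- Lower bound on the field of values of the additive Schwarz
operator `Q^a = ∑_{ℓ=0}^N Q_ℓ`:
`|(v, Q^a v)_V| ≥ (8(C_cont² C_* + 4C_μ))⁻¹ ‖v‖_V²`. -/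
theorem additive_schwarz_field_of_values_lower_bound
    {V : Type*} [NormedAddCommGroup V] [InnerProductSpace ℂ V] [FiniteDimensional ℂ V]
    -- a second inner product `(·,·)_H` (linear in the first argument, conjugate-linear
    -- in the second) with norm `normH`, dominated by the `V`-norm `‖·‖`
    (ipH : V →ₗ[ℂ] V →ₛₗ[starRingEnd ℂ] ℂ)
    (hHsymm : ∀ u v : V, ipH u v = starRingEnd ℂ (ipH v u))
    (hHdef : ∀ v : V, ipH v v = 0 → v = 0)
    (normH : V → ℝ) (hnormH : ∀ v : V, normH v = Real.sqrt (ipH v v).re)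
    (hHle : ∀ v : V, normH v ≤ ‖v‖)
    -- the sesquilinear perturbation `b`, bounded with respect to `normH`
    (Cμ : ℝ) (hCμ : 0 < Cμ)
    (b : V →ₗ[ℂ] V →ₛₗ[starRingEnd ℂ] ℂ)
    (hb : ∀ u v : V, ‖b u v‖ ≤ Cμ * normH u * normH v)
    -- the form `a(u,v) = (u,v)_V + b(u,v)`, linear in the first argument
    (a : V → V → ℂ) (ha : ∀ u v : V, a u v = ⟪v, u⟫_ℂ + b u v)
    (Ccont : ℝ) (hCcont : Ccont = 1 + Cμ)
    -- subspaces `V_0, V_1, …, V_N` with Galerkin projections `Q_0, Q_ℓ`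
    {N : ℕ} (V0 : Submodule ℂ V) (Vl : Fin N → Submodule ℂ V)
    (Q0 : V →ₗ[ℂ] V) (Ql : Fin N → V →ₗ[ℂ] V)
    (hQ0mem : ∀ v : V, Q0 v ∈ V0)
    (hQ0gal : ∀ v : V, ∀ w ∈ V0, a (Q0 v) w = a v w)
    (hQlmem : ∀ ℓ (v : V), Ql ℓ v ∈ Vl ℓ)
    (hQlgal : ∀ ℓ (v : V), ∀ w ∈ Vl ℓ, a (Ql ℓ v) w = a v w)
    -- the constants
    (Λ Cs σ κ : ℝ) (hΛ : 1 ≤ Λ) (hCs : 0 < Cs) (hσpos : 0 < σ) (hκpos : 0 < κ)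
    -- (i) a two-level stable splitting
    (hsplit : ∀ v : V, ∃ (v0 : V) (vl : Fin N → V),
      v0 ∈ V0 ∧ (∀ ℓ, vl ℓ ∈ Vl ℓ) ∧ v = v0 + ∑ ℓ, vl ℓ ∧
        ‖v0‖ ^ 2 + ∑ ℓ, ‖vl ℓ‖ ^ 2 ≤ Cs * ‖v‖ ^ 2)
    -- (ii) the coarse-space approximation property
    (hσ : ∀ v : V, normH (v - Q0 v) ≤ σ * ‖v‖)
    -- (iii) local seminorms and local cross-term bounds
    (p : Fin N → Seminorm ℂ V)
    (hpsum : ∀ v : V, ∑ ℓ, p ℓ v ^ 2 ≤ Λ * ‖v‖ ^ 2)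
    (hcross : ∀ ℓ (v : V), ‖(⟪Ql ℓ v, v - Ql ℓ v⟫_ℂ : ℂ)‖ ≤ κ * p ℓ v * ‖Ql ℓ v‖)
    -- smallness conditions
    (hsmall₁ : 4 * Cμ * σ ^ 2 ≤ 1 / 2)
    (hsmall₂ : (Cμ * σ + κ * Real.sqrt Λ) ^ 2 ≤ (4 * (Ccont ^ 2 * Cs + 4 * Cμ))⁻¹) :
    ∀ v : V,
      (8 * (Ccont ^ 2 * Cs + 4 * Cμ))⁻¹ * ‖v‖ ^ 2 ≤ ‖(⟪Q0 v + ∑ ℓ, Ql ℓ v, v⟫_ℂ : ℂ)‖ := by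
  intro v
  have hK : 0 < Ccont ^ 2 * Cs + 4 * Cμ := by positivity
  have hHnn : ∀ u, 0 ≤ normH u := fun u => by rw [hnormH]; exact Real.sqrt_nonneg _
  have hCc : 0 < Ccont := by rw [hCcont]; linarith
  have habound : ∀ u w, ‖a u w‖ ≤ Ccont * ‖u‖ * ‖w‖ := fun u w => by
    have h1 : ‖a u w‖ ≤ ‖(⟪w, u⟫_ℂ : ℂ)‖ + ‖b u w‖ := by rw [ha]; exact norm_add_le _ _
    have h2 := norm_inner_le_norm (𝕜 := ℂ) w u
    have h4 : Cμ * normH u * normH w ≤ Cμ * ‖u‖ * ‖w‖ := by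
      have := hHnn w
      gcongr <;> apply hHle
    rw [hCcont]
    linarith [hb u w]
  set T := ∑ ℓ, ‖Ql ℓ v‖ ^ 2 with hT
  have hT0 : 0 ≤ T := Finset.sum_nonneg fun _ _ => by positivity
  set S := ‖Q0 v‖ ^ 2 + T with hS
  have hS0 : 0 ≤ S := by positivity
  have hlower : ‖v‖ ^ 2 ≤ 2 * (Ccont ^ 2 * Cs + 4 * Cμ) * S := by
    obtain ⟨v0, vl, hv0, hvl, hsum, hst⟩ := hsplit v
    have hvv : a v v = a (Q0 v) v0 + ∑ ℓ, a (Ql ℓ v) (vl ℓ) := by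
      have hadd : a v (v0 + ∑ ℓ, vl ℓ) = a v v0 + ∑ ℓ, a v (vl ℓ) := by
        simp only [ha, inner_add_left, sum_inner, map_add, map_sum, Finset.sum_add_distrib]
        ring
      rw [← hsum] at hadd
      rw [hadd, hQ0gal v v0 hv0]
      congr 1
      exact Finset.sum_congr rfl fun ℓ _ => (hQlgal ℓ v _ (hvl ℓ)).symm
    -- Young's inequality with weight `C_*`, matched to the constant of the stable splitting
    have hyoung : ∀ q x : V,
        ‖a q x‖ ≤ Ccont ^ 2 * Cs / 2 * ‖q‖ ^ 2 + (2 * Cs)⁻¹ * ‖x‖ ^ 2 := fun q x => by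
      refine (habound q x).trans ?_
      have hsq : Ccont ^ 2 * Cs / 2 * ‖q‖ ^ 2 + (2 * Cs)⁻¹ * ‖x‖ ^ 2 - Ccont * ‖q‖ * ‖x‖
          = (2 * Cs)⁻¹ * (Ccont * Cs * ‖q‖ - ‖x‖) ^ 2 := by
        field_simp
        ring
      have : 0 ≤ (2 * Cs)⁻¹ * (Ccont * Cs * ‖q‖ - ‖x‖) ^ 2 := by positivity
      linarith
    have havv : ‖a v v‖ ≤ Ccont ^ 2 * Cs / 2 * S + ‖v‖ ^ 2 / 2 := by
      calc ‖a v v‖ ≤ ‖a (Q0 v) v0‖ + ∑ ℓ, ‖a (Ql ℓ v) (vl ℓ)‖ := by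
            rw [hvv]
            exact (norm_add_le _ _).trans (by gcongr; exact norm_sum_le _ _)
        _ ≤ (Ccont ^ 2 * Cs / 2 * ‖Q0 v‖ ^ 2 + (2 * Cs)⁻¹ * ‖v0‖ ^ 2)
            + ∑ ℓ, (Ccont ^ 2 * Cs / 2 * ‖Ql ℓ v‖ ^ 2 + (2 * Cs)⁻¹ * ‖vl ℓ‖ ^ 2) :=
            add_le_add (hyoung _ _) (Finset.sum_le_sum fun _ _ => hyoung _ _)
        _ = Ccont ^ 2 * Cs / 2 * S + (2 * Cs)⁻¹ * (‖v0‖ ^ 2 + ∑ ℓ, ‖vl ℓ‖ ^ 2) := by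
            rw [Finset.sum_add_distrib, ← Finset.mul_sum, ← Finset.mul_sum]
            ring
        _ ≤ Ccont ^ 2 * Cs / 2 * S + (2 * Cs)⁻¹ * (Cs * ‖v‖ ^ 2) := by gcongr
        _ = _ := by field_simp
    have hgard : ‖v‖ ^ 2 ≤ ‖a v v‖ + Cμ * normH v ^ 2 := by
      have h1 : (⟪v, v⟫_ℂ : ℂ) = a v v - b v v := by rw [ha]; ring
      have h2 : ‖(⟪v, v⟫_ℂ : ℂ)‖ = ‖v‖ ^ 2 := by
        rw [inner_self_eq_norm_sq_to_K]; simp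
      have h3 := norm_sub_le (a v v) (b v v)
      rw [← h1, h2] at h3
      linarith [hb v v]
    have hH : normH v ^ 2 ≤ 2 * (σ * ‖v‖) ^ 2 + 2 * ‖Q0 v‖ ^ 2 := by
      have h1 := normH_sq_add_le ipH hHsymm hHdef (v - Q0 v) (Q0 v)
      rw [sub_add_cancel, ← hnormH, ← hnormH, ← hnormH] at h1
      have h2 := pow_le_pow_left₀ (hHnn _) (hσ v) 2
      have h3 := pow_le_pow_left₀ (hHnn _) (hHle (Q0 v)) 2
      linarith
    have h5 := mul_le_mul_of_nonneg_left hH hCμ.le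
    have h6 := mul_le_mul_of_nonneg_right hsmall₁ (sq_nonneg ‖v‖)
    have h7 : Cμ * ‖Q0 v‖ ^ 2 ≤ Cμ * S := by gcongr; linarith
    nlinarith
  set τ := Cμ * σ + κ * √Λ with hτ
  have hupper : S - τ * ‖v‖ * √S ≤ ‖(⟪Q0 v + ∑ ℓ, Ql ℓ v, v⟫_ℂ : ℂ)‖ := by
    have hdecomp : ∀ q : V, (⟪q, v⟫_ℂ : ℂ) = ((‖q‖ ^ 2 : ℝ) : ℂ) + ⟪q, v - q⟫_ℂ := fun q => by
      rw [inner_sub_right, inner_self_eq_norm_sq_to_K]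
      push_cast
      simp
    have hmain : (⟪Q0 v + ∑ ℓ, Ql ℓ v, v⟫_ℂ : ℂ)
        = (S : ℂ) + (⟪Q0 v, v - Q0 v⟫_ℂ + ∑ ℓ, ⟪Ql ℓ v, v - Ql ℓ v⟫_ℂ) := by
      rw [inner_add_left, sum_inner, hdecomp (Q0 v),
        Finset.sum_congr rfl fun ℓ _ => hdecomp (Ql ℓ v), Finset.sum_add_distrib, hS, hT]
      push_cast
      ring
    have hE0 : ‖(⟪Q0 v, v - Q0 v⟫_ℂ : ℂ)‖ ≤ Cμ * σ * ‖v‖ * √S := by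
      have h1 : (⟪Q0 v, v - Q0 v⟫_ℂ : ℂ) = -b (v - Q0 v) (Q0 v) := by
        have := hQ0gal v (Q0 v) (hQ0mem v)
        rw [ha, ha] at this
        rw [inner_sub_right, map_sub, LinearMap.sub_apply]
        linear_combination -this
      rw [h1, norm_neg]
      have h2 : ‖Q0 v‖ ≤ √S := Real.le_sqrt_of_sq_le (by linarith)
      calc _ ≤ Cμ * normH (v - Q0 v) * normH (Q0 v) := hb _ _
        _ ≤ Cμ * (σ * ‖v‖) * √S := by
          have := hHnn (Q0 v)
          gcongr
          · exact hσ v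
          · exact (hHle _).trans h2
        _ = _ := by ring
    have hE1 : ‖∑ ℓ, (⟪Ql ℓ v, v - Ql ℓ v⟫_ℂ : ℂ)‖ ≤ κ * √Λ * ‖v‖ * √S := by
      calc _ ≤ ∑ ℓ, κ * p ℓ v * ‖Ql ℓ v‖ :=
            norm_sum_le_of_le _ fun ℓ _ => hcross ℓ v
        _ = κ * ∑ ℓ, p ℓ v * ‖Ql ℓ v‖ := by simp only [Finset.mul_sum, mul_assoc]
        _ ≤ κ * (√(∑ ℓ, p ℓ v ^ 2) * √T) := by
            gcongr; exact Real.sum_mul_le_sqrt_mul_sqrt _ _ _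
        _ ≤ κ * (√(Λ * ‖v‖ ^ 2) * √S) := by
            gcongr
            · exact hpsum v
            · linarith [sq_nonneg ‖Q0 v‖]
        _ = _ := by
            rw [Real.sqrt_mul (by linarith), Real.sqrt_sq (norm_nonneg v)]
            ring
    have h1 := norm_sub_le_norm_add (S : ℂ)
      (⟪Q0 v, v - Q0 v⟫_ℂ + ∑ ℓ, ⟪Ql ℓ v, v - Ql ℓ v⟫_ℂ)
    rw [← hmain, Complex.norm_real, Real.norm_of_nonneg hS0] at h1
    have h2 := norm_add_le (⟪Q0 v, v - Q0 v⟫_ℂ : ℂ) (∑ ℓ, ⟪Ql ℓ v, v - Ql ℓ v⟫_ℂ)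
    rw [hτ]
    linarith
  set K := Ccont ^ 2 * Cs + 4 * Cμ with hKdef
  have hfin1 : (8 * K)⁻¹ * ‖v‖ ^ 2 ≤ S / 4 := by
    rw [inv_mul_le_iff₀ (by positivity)]
    linarith
  have hfin2 : τ ^ 2 * ‖v‖ ^ 2 ≤ 2 * ((8 * K)⁻¹ * ‖v‖ ^ 2) := by
    have h1 := mul_le_mul_of_nonneg_right hsmall₂ (sq_nonneg ‖v‖)
    have h2 : (4 * K)⁻¹ = 2 * (8 * K)⁻¹ := by field_simp; norm_num
    rw [h2] at h1
    linarith
  have hfin3 : τ * ‖v‖ * √S ≤ (τ ^ 2 * ‖v‖ ^ 2 + S) / 2 := by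
    nlinarith [sq_nonneg (τ * ‖v‖ - √S), Real.sq_sqrt hS0]
  linarith
end

section
/- (Lower bound on the field of values of the hybrid Schwarz operator.) Let V_0, V_1, …, V_N ⊆ V_h be subspaces on which the Galerkin projections Q_ℓ := Q_{V_ℓ} are well defined, and let Λ ≥ 1, C_{Q0} > 0, C_*, β, σ, κ ≥ 0 with C_cont² C_* ≥ 1. Suppose: (i) every w ∈ V_h admits a splitting w = Σ_{ℓ=1}^N w_ℓ with w_ℓ ∈ V_ℓ and Σ_{ℓ=1}^N ‖w_ℓ‖_V² ≤ C_* (‖w‖_V² + β ‖w‖_H²); (ii) ‖(I − Q_0) v‖_V ≤ C_{Q0} ‖v‖_V and ‖(I − Q_0) v‖_H ≤ σ ‖v‖_V for all v ∈ V_h; (iii) there are seminorms p_1, …, p_N on V_h with Σ_{ℓ=1}^N p_ℓ(w)² ≤ Λ ‖w‖_V² for all w ∈ V_h, and |((I − Q_ℓ) w, Q_ℓ w)_V| ≤ κ p_ℓ(w) ‖Q_ℓ w‖_V for all w ∈ V_h and ℓ = 1, …, N. If (2 C_μ + β) σ² ≤ 1/12, (C_μ σ)² ≤ (12 C_cont²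 C_*)^{-1}, and κ² Λ C_{Q0}² ≤ (12 C_cont² C_*)^{-1}, then for all v ∈ V_h, |(v, Q^h v)_V| ≥ (8 C_cont² C_*)^{-1} ‖v‖_V², where Q^h := Q_0 + (I − Q_0)* (Σ_{ℓ=1}^N Q_ℓ)(I − Q_0) and (I − Q_0)* is the (·,·)_V-adjoint of I − Q_0. -/
/-!
Put `w = v - Q₀ v`, `S = ∑ ‖Q_ℓ w‖²`, `K = C_cont² C_*`. Moving the adjoint across,
`(Q^h v, v) = (Q₀ v, v) + ∑ (Q_ℓ w, w)`. Three facts control the real part of the right side.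

* Galerkin orthogonality `a(w, Q₀ v) = 0` gives `(w, Q₀ v)_V = -b(w, Q₀ v)`, which is at most
  `C_μ σ ‖v‖ ‖Q₀ v‖` in modulus; hence `Q₀ v` and `w` are almost `V`-orthogonal.
* `∑ (Q_ℓ w, w) = S + ∑ (Q_ℓ w, w - Q_ℓ w)`, and the cross terms are at most
  `κ √Λ C_{Q0} ‖v‖ √S` by Cauchy–Schwarz.
* Testing `a(w, ·)` with the stable splitting of `w` and using `a(w, w_ℓ) = a(Q_ℓ w, w_ℓ)` bounds
  `|a(w, w)|² ≤ K S (‖w‖² + β ‖w‖_H²)`; with the Gårding inequality this yields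
  `‖w‖² - (2 C_μ + β) ‖w‖_H² ≤ K S` (`le_of_sq_le_garding`).

What remains is a quadratic inequality in `‖v‖, ‖Q₀ v‖, √S` (`scalar_lower_bound`), which even
gives the constant `1 / (4 K)`.
-/

open Finset
open scoped InnerProductSpace

/-- Gårding's inequality combined with the stable splitting: here `T = ‖w‖²`, `H = ‖w‖_H²`
and `y √(T + β H)` is the bound on `|a(w, w)|` that the splitting provides. -/
lemma le_of_sq_le_garding {T H m β y : ℝ} (hH : 0 ≤ H) (hm : 0 ≤ m) (hβ : 0 ≤ β)
    (h : T - m * H ≤ y * √(T + β * H)) :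
    T - (2 * m + β) * H ≤ y ^ 2 := by
  have hmH := mul_nonneg hm hH
  have hβH := mul_nonneg hβ hH
  rcases le_or_gt (T - m * H) 0 with h0 | h0
  · nlinarith [sq_nonneg y]
  have hA : 0 < T + β * H := by nlinarith
  have hsq : (T - m * H) ^ 2 ≤ y ^ 2 * (T + β * H) := by
    calc (T - m * H) ^ 2 ≤ (y * √(T + β * H)) ^ 2 := by gcongr
      _ = _ := by rw [mul_pow, Real.sq_sqrt hA.le]
  refine le_of_mul_le_mul_right ?_ hA
  -- `(T - m H)² - (T - (2 m + β) H) (T + β H) = ((m + β) H)²`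
  nlinarith [sq_nonneg ((m + β) * H)]

/-- The final quadratic inequality, with `n = ‖v‖`, `x = ‖Q₀ v‖`, `s = √S`, `T = ‖w‖²`, and `c`, `d`
the relative sizes of the coarse and local cross terms. -/
lemma scalar_lower_bound {K n x s T c d R : ℝ} (hK : 1 ≤ K) (hn : 0 ≤ n) (hx : 0 ≤ x)
    (hc0 : 0 ≤ c) (hc : c ^ 2 ≤ (12 * K)⁻¹) (hd : d ^ 2 ≤ (12 * K)⁻¹)
    (hT : n ^ 2 - x ^ 2 - 2 * (c * n * x) ≤ T) (hS : T - n ^ 2 / 12 ≤ K * s ^ 2)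
    (hR : x ^ 2 - c * n * x + s ^ 2 - d * n * s ≤ R) :
    (8 * K)⁻¹ * n ^ 2 ≤ R := by
  have hK0 : 0 < K := by linarith
  have e : K * (12 * K)⁻¹ = 1 / 12 := by field_simp
  have hc' : K * c ^ 2 * n ^ 2 ≤ 1 / 12 * n ^ 2 := by
    rw [← e]; gcongr
  have hd' : K * d ^ 2 * n ^ 2 ≤ 1 / 12 * n ^ 2 := by
    rw [← e]; gcongr
  have h1 : 0 ≤ (K - 1) * x ^ 2 := mul_nonneg (by linarith) (sq_nonneg x)
  have h2 : 0 ≤ (K - 1) * (c * n * x) := mul_nonneg (by linarith) (by positivity)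
  have h3 : 0 ≤ K * (x - 2 * (c * n)) ^ 2 := by positivity
  have h4 : 0 ≤ K * (s - d * n) ^ 2 := by positivity
  have h5 : K * (x ^ 2 - c * n * x + s ^ 2 - d * n * s) ≤ K * R := by gcongr
  -- half of `K s²` is traded for `‖w‖²`; the other half and `K x² / 2` absorb the cross terms
  have h6 : n ^ 2 / 4 ≤ K * R := by nlinarith
  have h7 : (8 * K)⁻¹ * n ^ 2 = (n ^ 2 / 8) / K := by field_simp
  rw [h7, div_le_iff₀ hK0]
  nlinarith [sq_nonneg n]

/-- Lower bound on the field of values of the hybrid Schwarz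
operator `Q^h = Q₀ + (I - Q₀)* (∑_{ℓ=1}^N Q_ℓ)(I - Q₀)`:
`|(v, Q^h v)_V| ≥ (8 C_cont² C_*)⁻¹ ‖v‖_V²`. -/
theorem hybrid_schwarz_field_of_values_lower_bound
    {V : Type*} [NormedAddCommGroup V] [InnerProductSpace ℂ V] [FiniteDimensional ℂ V]
    -- a second inner product `(·,·)_H` (linear in the first argument, conjugate-linear
    -- in the second) with norm `normH`, dominated by the `V`-norm `‖·‖`
    (ipH : V →ₗ[ℂ] V →ₛₗ[starRingEnd ℂ] ℂ)
    (hHsymm : ∀ u v : V, ipH u v = starRingEnd ℂ (ipH v u))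
    (hHdef : ∀ v : V, ipH v v = 0 → v = 0)
    (normH : V → ℝ) (hnormH : ∀ v : V, normH v = Real.sqrt (ipH v v).re)
    (hHle : ∀ v : V, normH v ≤ ‖v‖)
    -- the sesquilinear perturbation `b`, bounded with respect to `normH`
    (Cμ : ℝ) (hCμ : 0 < Cμ)
    (b : V →ₗ[ℂ] V →ₛₗ[starRingEnd ℂ] ℂ)
    (hb : ∀ u v : V, ‖b u v‖ ≤ Cμ * normH u * normH v)
    -- the form `a(u,v) = (u,v)_V + b(u,v)`, linear in the first argument
    (a : V → V → ℂ) (ha : ∀ u v : V, a u v = ⟪v, u⟫_ℂ + b u v)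
    (Ccont : ℝ) (hCcont : Ccont = 1 + Cμ)
    -- subspaces `V_0, V_1, …, V_N` with Galerkin projections `Q_0, Q_ℓ`
    {N : ℕ} (V0 : Submodule ℂ V) (Vl : Fin N → Submodule ℂ V)
    (Q0 : V →ₗ[ℂ] V) (Ql : Fin N → V →ₗ[ℂ] V)
    (hQ0mem : ∀ v : V, Q0 v ∈ V0)
    (hQ0gal : ∀ v : V, ∀ w ∈ V0, a (Q0 v) w = a v w)
    (hQlmem : ∀ ℓ (v : V), Ql ℓ v ∈ Vl ℓ)
    (hQlgal : ∀ ℓ (v : V), ∀ w ∈ Vl ℓ, a (Ql ℓ v) w = a v w)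
    -- the constants
    (Λ CQ0 Cs β σ κ : ℝ) (hΛ : 1 ≤ Λ) (hCQ0 : 0 < CQ0)
    (hCs : 0 ≤ Cs) (hβ : 0 ≤ β) (hσ0 : 0 ≤ σ) (hκ0 : 0 ≤ κ)
    (hCsbig : 1 ≤ Ccont ^ 2 * Cs)
    -- (i) a one-level stable splitting
    (hsplit : ∀ w : V, ∃ wl : Fin N → V,
      (∀ ℓ, wl ℓ ∈ Vl ℓ) ∧ w = ∑ ℓ, wl ℓ ∧
        ∑ ℓ, ‖wl ℓ‖ ^ 2 ≤ Cs * (‖w‖ ^ 2 + β * normH w ^ 2))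
    -- (ii) the coarse-space bounds
    (hQ0bd : ∀ v : V, ‖v - Q0 v‖ ≤ CQ0 * ‖v‖)
    (hσ : ∀ v : V, normH (v - Q0 v) ≤ σ * ‖v‖)
    -- (iii) local seminorms and local cross-term bounds
    (p : Fin N → Seminorm ℂ V)
    (hpsum : ∀ w : V, ∑ ℓ, p ℓ w ^ 2 ≤ Λ * ‖w‖ ^ 2)
    (hcross : ∀ ℓ (w : V), ‖(⟪Ql ℓ w, w - Ql ℓ w⟫_ℂ : ℂ)‖ ≤ κ * p ℓ w * ‖Ql ℓ w‖)
    -- smallness conditions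
    (hsmall₁ : (2 * Cμ + β) * σ ^ 2 ≤ 1 / 12)
    (hsmall₂ : (Cμ * σ) ^ 2 ≤ (12 * Ccont ^ 2 * Cs)⁻¹)
    (hsmall₃ : κ ^ 2 * Λ * CQ0 ^ 2 ≤ (12 * Ccont ^ 2 * Cs)⁻¹) :
    ∀ v : V,
      (8 * Ccont ^ 2 * Cs)⁻¹ * ‖v‖ ^ 2
        ≤ ‖(⟪Q0 v + LinearMap.adjoint ((1 : V →ₗ[ℂ] V) - Q0)
              (∑ ℓ, Ql ℓ (v - Q0 v)), v⟫_ℂ : ℂ)‖ := by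
  intro v
  have hH0 : ∀ u, 0 ≤ normH u := fun u => by rw [hnormH]; exact Real.sqrt_nonneg _
  have hC0 : 0 ≤ Ccont := by linarith
  obtain ⟨w, hw⟩ : ∃ w, w = v - Q0 v := ⟨_, rfl⟩
  have hv : v = Q0 v + w := by rw [hw]; abel
  have ha_bd : ∀ u z, ‖a u z‖ ≤ Ccont * ‖u‖ * ‖z‖ := fun u z => by
    have h2 : Cμ * normH u * normH z ≤ Cμ * ‖u‖ * ‖z‖ := by
      gcongr
      · exact hH0 z
      · exact hHle u
      · exact hHle z
    calc ‖a u z‖ ≤ ‖(⟪z, u⟫_ℂ : ℂ)‖ + ‖b u z‖ := by rw [ha]; exact norm_add_le _ _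
      _ ≤ ‖z‖ * ‖u‖ + Cμ * ‖u‖ * ‖z‖ :=
        add_le_add (norm_inner_le_norm z u) ((hb u z).trans h2)
      _ = _ := by rw [hCcont]; ring
  have hwn : ‖w‖ ≤ CQ0 * ‖v‖ := hw ▸ hQ0bd v
  have hwH : normH w ≤ σ * ‖v‖ := hw ▸ hσ v
  obtain ⟨S, hS⟩ : ∃ S, S = ∑ ℓ, ‖Ql ℓ w‖ ^ 2 := ⟨_, rfl⟩
  have hS0 : 0 ≤ S := by rw [hS]; positivity
  have horth : ‖(⟪Q0 v, w⟫_ℂ : ℂ)‖ ≤ Cμ * σ * ‖v‖ * ‖Q0 v‖ := by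
    have h := hQ0gal v (Q0 v) (hQ0mem v)
    rw [ha, ha] at h
    have h1 : (⟪Q0 v, w⟫_ℂ : ℂ) = -b w (Q0 v) := by
      rw [hw, inner_sub_right, map_sub, LinearMap.sub_apply]
      linear_combination -h
    rw [h1, norm_neg]
    calc ‖b w (Q0 v)‖ ≤ Cμ * normH w * normH (Q0 v) := hb _ _
      _ ≤ Cμ * (σ * ‖v‖) * ‖Q0 v‖ := by
        gcongr
        · exact hH0 _
        · exact hHle _
      _ = _ := by ring
  have horth_re := (abs_le.mp ((Complex.abs_re_le_norm _).trans horth))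
  have hpyth : ‖v‖ ^ 2 = ‖Q0 v‖ ^ 2 + 2 * (⟪Q0 v, w⟫_ℂ : ℂ).re + ‖w‖ ^ 2 := by
    conv_lhs => rw [hv]
    exact norm_add_sq (𝕜 := ℂ) (Q0 v) w
  have hlow : ‖w‖ ^ 2 - (2 * Cμ + β) * normH w ^ 2 ≤ Ccont ^ 2 * Cs * √S ^ 2 := by
    obtain ⟨wl, hmem, hsum, hbd⟩ := hsplit w
    have haw : a w w = ∑ ℓ, a (Ql ℓ w) (wl ℓ) := by
      have h1 : ∀ ℓ, a (Ql ℓ w) (wl ℓ) = ⟪wl ℓ, w⟫_ℂ + b w (wl ℓ) := fun ℓ => by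
        rw [hQlgal ℓ w _ (hmem ℓ), ha]
      simp_rw [h1]
      rw [sum_add_distrib, ← sum_inner, ← map_sum, ← hsum, ha]
    have hup : ‖a w w‖ ≤ Ccont * (√S * √(Cs * (‖w‖ ^ 2 + β * normH w ^ 2))) := by
      calc ‖a w w‖ ≤ ∑ ℓ, ‖a (Ql ℓ w) (wl ℓ)‖ := by rw [haw]; exact norm_sum_le _ _
        _ ≤ ∑ ℓ, Ccont * (‖Ql ℓ w‖ * ‖wl ℓ‖) :=
          sum_le_sum fun ℓ _ => (ha_bd _ _).trans_eq (mul_assoc _ _ _)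
        _ = Ccont * ∑ ℓ, ‖Ql ℓ w‖ * ‖wl ℓ‖ := by rw [mul_sum]
        _ ≤ Ccont * (√S * √(∑ ℓ, ‖wl ℓ‖ ^ 2)) := by
          rw [hS]; gcongr; exact Real.sum_mul_le_sqrt_mul_sqrt _ _ _
        _ ≤ _ := by gcongr
    have hgard : ‖w‖ ^ 2 - Cμ * normH w ^ 2 ≤ ‖a w w‖ := by
      have h1 := Complex.re_le_norm (a w w)
      have h2 := (abs_le.mp ((Complex.abs_re_le_norm _).trans (hb w w))).1
      have h3 : (⟪w, w⟫_ℂ : ℂ).re = ‖w‖ ^ 2 := inner_self_eq_norm_sq (𝕜 := ℂ) w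
      have h4 : (a w w).re = ‖w‖ ^ 2 + (b w w).re := by rw [ha, Complex.add_re, h3]
      nlinarith
    have := le_of_sq_le_garding (y := Ccont * √S * √Cs) (sq_nonneg (normH w))
      hCμ.le hβ (hgard.trans (hup.trans_eq (by rw [Real.sqrt_mul hCs]; ring)))
    refine this.trans_eq ?_
    rw [mul_pow, mul_pow, Real.sq_sqrt hCs]; ring
  have hlow' : ‖w‖ ^ 2 - ‖v‖ ^ 2 / 12 ≤ Ccont ^ 2 * Cs * √S ^ 2 := by
    have h1 : (2 * Cμ + β) * normH w ^ 2 ≤ (2 * Cμ + β) * (σ * ‖v‖) ^ 2 := by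
      gcongr
      exact hH0 w
    have h2 := mul_le_mul_of_nonneg_right hsmall₁ (sq_nonneg ‖v‖)
    nlinarith
  have hloc : S - κ * √Λ * CQ0 * ‖v‖ * √S ≤ (∑ ℓ, (⟪Ql ℓ w, w⟫_ℂ : ℂ)).re := by
    have h1 : ∀ ℓ, ‖Ql ℓ w‖ ^ 2 - κ * (p ℓ w * ‖Ql ℓ w‖) ≤ (⟪Ql ℓ w, w⟫_ℂ : ℂ).re := fun ℓ => by
      have h2 := (abs_le.mp ((Complex.abs_re_le_norm _).trans (hcross ℓ w))).1
      have h3 : (⟪Ql ℓ w, Ql ℓ w⟫_ℂ : ℂ).re = ‖Ql ℓ w‖ ^ 2 :=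
        inner_self_eq_norm_sq (𝕜 := ℂ) _
      rw [inner_sub_right, Complex.sub_re, h3] at h2
      linarith
    have h4 : ∑ ℓ, p ℓ w * ‖Ql ℓ w‖ ≤ √Λ * (CQ0 * ‖v‖) * √S := by
      calc ∑ ℓ, p ℓ w * ‖Ql ℓ w‖ ≤ √(∑ ℓ, p ℓ w ^ 2) * √S := by
            rw [hS]; exact Real.sum_mul_le_sqrt_mul_sqrt _ _ _
        _ ≤ √(Λ * ‖w‖ ^ 2) * √S := by gcongr; exact hpsum w
        _ = √Λ * ‖w‖ * √S := by
            rw [Real.sqrt_mul (by linarith), Real.sqrt_sq (norm_nonneg w)]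
        _ ≤ _ := by gcongr
    rw [Complex.re_sum]
    calc S - κ * √Λ * CQ0 * ‖v‖ * √S = S - κ * (√Λ * (CQ0 * ‖v‖) * √S) := by ring
      _ ≤ S - κ * ∑ ℓ, p ℓ w * ‖Ql ℓ w‖ := by gcongr
      _ = ∑ ℓ, (‖Ql ℓ w‖ ^ 2 - κ * (p ℓ w * ‖Ql ℓ w‖)) := by
        rw [sum_sub_distrib, ← mul_sum, hS]
      _ ≤ _ := sum_le_sum fun ℓ _ => h1 ℓ
  have hexp : (⟪Q0 v + LinearMap.adjoint ((1 : V →ₗ[ℂ] V) - Q0)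
      (∑ ℓ, Ql ℓ (v - Q0 v)), v⟫_ℂ : ℂ) =
      ⟪Q0 v, Q0 v⟫_ℂ + ⟪Q0 v, w⟫_ℂ + ∑ ℓ, (⟪Ql ℓ w, w⟫_ℂ : ℂ) := by
    rw [inner_add_left, LinearMap.adjoint_inner_left, LinearMap.sub_apply, Module.End.one_apply,
      ← hw, sum_inner, ← inner_add_right, ← hv]
  refine le_trans ?_ (Complex.re_le_norm _)
  have hQQ : (⟪Q0 v, Q0 v⟫_ℂ : ℂ).re = ‖Q0 v‖ ^ 2 := inner_self_eq_norm_sq (𝕜 := ℂ) _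
  rw [hexp, Complex.add_re, Complex.add_re, hQQ, mul_assoc 8]
  rw [mul_assoc 12] at hsmall₂ hsmall₃
  refine scalar_lower_bound (x := ‖Q0 v‖) (s := √S) (c := Cμ * σ) (d := κ * √Λ * CQ0) hCsbig
    (norm_nonneg v) (norm_nonneg _) (by positivity) hsmall₂ ?_ ?_ hlow' ?_
  · rwa [mul_pow, mul_pow, Real.sq_sqrt (by linarith)]
  · linarith [horth_re.2]
  · rw [Real.sq_sqrt hS0]
    linarith [horth_re.1]
end
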